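/- arXiv:2303.02923 — 3 statements merged into one kernel-verified Lean document; each statement's English description precedes it below -/
import Mathlib

section
/- Let T > 0 and α ∈ (0,1). Let f : [0,T] → ℝ be continuous on [0,T], continuously differentiable on (0,T], and with f′ ∈ L¹(0,T). Then for every t ∈ (0,T] the Caputo fractional derivative ∂ₜ^α f(t) := (1/Γ(1−α)) ∫₀ᵗ (t−s)^(−α) f′(s) ds satisfies ∂ₜ^α f(t) = (f(t) − f(0))/(t^α Γ(1−α)) + (α/Γ(1−α)) ∫₀ᵗ (f(t) − f(t−τ)) τ^(−α−1) dτ; in particular the last integral converges. -/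
open MeasureTheory Real Set

/-!
Put `g τ = f t - f (t - τ)`, so that `g 0 = 0`, `g' τ = f' (t - τ)`, and the claim is integration by
parts for `∫₀ᵗ τ ^ (-α) g' τ dτ`. Since `f'` is bounded near `t`, the mean value inequality gives
`g τ = O(τ)` as `τ → 0+`. Hence `τ ^ (-α - 1) g τ` is `O(τ ^ (-α))`, which is integrable at `0`, and
the boundary term `τ ^ (-α) g τ` is `O(τ ^ (1 - α))`, which vanishes there.
-/

open Filter Asymptotics Topology

theorem tendsto_const_sub_nhdsGT (a c : ℝ) : Tendsto (c - ·) (𝓝[>] a) (𝓝[<] (c - a)) :=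
  (by fun_prop : Continuous (c - ·)).continuousWithinAt.tendsto_nhdsWithin
    fun _ hx ↦ sub_lt_sub_left hx c

variable {E : Type*} [NormedAddCommGroup E] [NormedSpace ℝ E]

theorem isBigO_sub_nhdsGT_of_hasDerivAt {g g' : ℝ → E} {a b : ℝ} (hab : a < b)
    (hg_cont : ContinuousOn g (Icc a b)) (hg_deriv : ∀ x ∈ Ioo a b, HasDerivAt g (g' x) x)
    (hg'_bdd : g' =O[𝓝[>] a] (fun _ ↦ (1 : ℝ))) :
    (fun x ↦ g x - g a) =O[𝓝[>] a] (fun x ↦ x - a) := by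
  obtain ⟨C, hC_nonneg, hC⟩ := hg'_bdd.exists_nonneg
  lift C to NNReal using hC_nonneg
  obtain ⟨c, hac, hc⟩ := mem_nhdsGT_iff_exists_Ioo_subset.mp hC.bound
  refine IsBigO.of_bound C ?_
  filter_upwards [Ioo_mem_nhdsGT hab, Ioo_mem_nhdsGT hac] with x hxb hxc
  have hlipschitz : LipschitzOnWith C g (Ioo a x) :=
    (convex_Ioo a x).lipschitzOnWith_of_nnnorm_hasDerivWithin_le
      (fun y hy ↦ (hg_deriv y ⟨hy.1, hy.2.trans hxb.2⟩).hasDerivWithinAt)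
      (fun y hy ↦ by simpa [← NNReal.coe_le_coe] using hc ⟨hy.1, hy.2.trans hxc.2⟩)
  have hclosure : closure (Ioo a x) = Icc a x := closure_Ioo hxb.1.ne
  have hlipschitz_Icc : LipschitzOnWith C g (Icc a x) :=
    hclosure ▸ (lipschitzOnWith_closure_iff
      (hclosure ▸ hg_cont.mono (Icc_subset_Icc_right hxb.2.le))).mpr hlipschitz
  exact hlipschitz_Icc.norm_sub_le (right_mem_Icc.mpr hxb.1.le) (left_mem_Icc.mpr hxb.1.le)

section PowerWeight

variable {g g' : ℝ → E} {r p t : ℝ}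

theorem rpow_smul_isBigO_rpow_add (hg : g =O[𝓝[>] 0] (fun x ↦ x ^ p)) :
    (fun x ↦ x ^ r • g x) =O[𝓝[>] 0] (fun x ↦ x ^ (r + p)) := by
  refine ((isBigO_refl (fun x : ℝ ↦ x ^ r) (𝓝[>] 0)).smul hg).congr' .rfl ?_
  filter_upwards [self_mem_nhdsWithin] with x hx
  rw [smul_eq_mul, rpow_add hx]

theorem tendsto_rpow_smul_zero_of_isBigO (hrp : 0 < r + p)
    (hg : g =O[𝓝[>] 0] (fun x ↦ x ^ p)) :
    Tendsto (fun x ↦ x ^ r • g x) (𝓝[>] 0) (𝓝 0) := by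
  refine (rpow_smul_isBigO_rpow_add hg).trans_tendsto ?_
  have hpow := (continuousAt_rpow_const 0 (r + p) (Or.inr hrp.le)).tendsto
  rw [zero_rpow hrp.ne'] at hpow
  exact hpow.mono_left nhdsWithin_le_nhds

theorem intervalIntegrable_rpow_smul_of_isBigO (ht : 0 < t) (hrp : -1 < r + p)
    (hg_int : IntervalIntegrable g volume 0 t) (hg : g =O[𝓝[>] 0] (fun x ↦ x ^ p)) :
    IntervalIntegrable (fun x ↦ x ^ r • g x) volume 0 t := by
  have hmeas : AEStronglyMeasurable (fun x ↦ x ^ r • g x) (volume.restrict (Ioc 0 t)) :=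
    (measurable_id.pow_const r).aestronglyMeasurable.smul hg_int.1.aestronglyMeasurable
  have hpow : IntegrableAtFilter (fun x : ℝ ↦ x ^ (r + p)) (𝓝[>] 0) volume :=
    ⟨Ioc 0 t, Ioc_mem_nhdsGT ht, (intervalIntegral.intervalIntegrable_rpow' hrp).1⟩
  obtain ⟨s, hs, hs_int⟩ := (rpow_smul_isBigO_rpow_add hg).integrableAtFilter
    ⟨Ioc 0 t, Ioc_mem_nhdsGT ht, hmeas⟩ hpow
  obtain ⟨b, hb, hbs⟩ := mem_nhdsGT_iff_exists_Ioc_subset.mp hs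
  have hc : 0 < min b t := lt_min hb ht
  have near_zero : IntervalIntegrable (fun x ↦ x ^ r • g x) volume 0 (min b t) :=
    (intervalIntegrable_iff_integrableOn_Ioc_of_le hc.le).mpr <|
      hs_int.mono_set ((Ioc_subset_Ioc_right (min_le_left b t)).trans hbs)
  have away_from_zero : IntervalIntegrable (fun x ↦ x ^ r • g x) volume (min b t) t := by
    refine (hg_int.mono_set ?_).continuousOn_smul ?_
    · rw [uIcc_of_le (min_le_right b t), uIcc_of_le ht.le]
      exact Icc_subset_Icc_left hc.le
    · rw [uIcc_of_le (min_le_right b t)]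
      exact continuousOn_id.rpow_const fun x hx ↦ Or.inl (hc.trans_le hx.1).ne'
  exact near_zero.trans away_from_zero

theorem integral_rpow_smul_deriv_eq [CompleteSpace E] (ht : 0 < t) (hrp : 0 < r + p)
    (hg_cont : ContinuousOn g (Icc 0 t)) (hg_deriv : ∀ x ∈ Ioo 0 t, HasDerivAt g (g' x) x)
    (hg'_int : IntervalIntegrable g' volume 0 t) (hg : g =O[𝓝[>] 0] (fun x ↦ x ^ p))
    (hg' : g' =O[𝓝[>] 0] (fun x ↦ x ^ (p - 1))) :
    ∫ x in (0 : ℝ)..t, x ^ r • g' x =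
      t ^ r • g t - r • ∫ x in (0 : ℝ)..t, x ^ (r - 1) • g x := by
  have hg_wint : IntervalIntegrable (fun x ↦ r • x ^ (r - 1) • g x) volume 0 t :=
    (intervalIntegrable_rpow_smul_of_isBigO ht (by linarith)
      (hg_cont.intervalIntegrable_of_Icc ht.le) hg).smul r
  have hg'_wint : IntervalIntegrable (fun x ↦ x ^ r • g' x) volume 0 t :=
    intervalIntegrable_rpow_smul_of_isBigO ht (by linarith) hg'_int hg'
  have hderiv : ∀ x ∈ Ioo 0 t,
      HasDerivAt (fun x ↦ x ^ r • g x) (x ^ r • g' x + r • x ^ (r - 1) • g x) x := fun x hx ↦ by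
    rw [smul_smul]
    exact (hasDerivAt_rpow_const (Or.inl hx.1.ne')).smul (hg_deriv x hx)
  have hend : Tendsto (fun x ↦ x ^ r • g x) (𝓝[<] t) (𝓝 (t ^ r • g t)) := by
    have hg_left : Tendsto g (𝓝[<] t) (𝓝 (g t)) :=
      (hg_cont t (right_mem_Icc.mpr ht.le)).mono_of_mem_nhdsWithin (Icc_mem_nhdsLT ht)
    exact ((continuousAt_rpow_const t r (Or.inl ht.ne')).tendsto.mono_left
      nhdsWithin_le_nhds).smul hg_left
  have hftc := intervalIntegral.integral_eq_sub_of_hasDerivAt_of_tendsto ht hderiv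
    (hg'_wint.add hg_wint) (tendsto_rpow_smul_zero_of_isBigO hrp hg) hend
  rw [intervalIntegral.integral_add hg'_wint hg_wint, sub_zero,
    intervalIntegral.integral_smul] at hftc
  exact eq_sub_of_add_eq hftc

end PowerWeight

theorem caputo_representation_general [CompleteSpace E] {f f' : ℝ → E} {α t : ℝ}
    (hα : α < 1) (ht : 0 < t) (hf_cont : ContinuousOn f (Icc 0 t))
    (hf_deriv : ∀ s ∈ Ioo 0 t, HasDerivAt f (f' s) s)
    (hf'_int : IntervalIntegrable f' volume 0 t)
    (hf'_bdd : f' =O[𝓝[<] t] (fun _ ↦ (1 : ℝ))) :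
    IntervalIntegrable (fun τ ↦ τ ^ (-α - 1) • (f t - f (t - τ))) volume 0 t ∧
      (1 / Gamma (1 - α)) • ∫ s in (0 : ℝ)..t, (t - s) ^ (-α) • f' s =
        (1 / (t ^ α * Gamma (1 - α))) • (f t - f 0) +
          (α / Gamma (1 - α)) • ∫ τ in (0 : ℝ)..t, τ ^ (-α - 1) • (f t - f (t - τ)) := by
  have hcont : ContinuousOn (fun τ ↦ f t - f (t - τ)) (Icc 0 t) :=
    continuousOn_const.sub <| hf_cont.comp (by fun_prop) fun τ hτ ↦
      ⟨sub_nonneg.mpr hτ.2, sub_le_self t hτ.1⟩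
  have hderiv : ∀ τ ∈ Ioo 0 t, HasDerivAt (fun τ ↦ f t - f (t - τ)) (f' (t - τ)) τ := fun τ hτ ↦ by
    simpa only [neg_neg] using ((hf_deriv (t - τ)
      ⟨sub_pos.mpr hτ.2, sub_lt_self t hτ.1⟩).comp_const_sub t τ).const_sub (f t)
  have hint : IntervalIntegrable (fun τ ↦ f' (t - τ)) volume 0 t := by
    simpa only [sub_self, sub_zero] using (hf'_int.comp_sub_left t).symm
  have hbdd : (fun τ ↦ f' (t - τ)) =O[𝓝[>] 0] (fun _ ↦ (1 : ℝ)) := by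
    have hreflect_tendsto := tendsto_const_sub_nhdsGT 0 t
    rw [sub_zero] at hreflect_tendsto
    exact hf'_bdd.comp_tendsto hreflect_tendsto
  have hreflect : ∫ s in (0 : ℝ)..t, (t - s) ^ (-α) • f' s =
      ∫ τ in (0 : ℝ)..t, τ ^ (-α) • f' (t - τ) := by
    simpa using intervalIntegral.integral_comp_sub_left (a := 0) (b := t)
      (fun τ ↦ τ ^ (-α) • f' (t - τ)) t
  have hlinear : (fun τ ↦ f t - f (t - τ)) =O[𝓝[>] 0] (fun τ ↦ τ ^ (1 : ℝ)) := by
    simpa only [sub_zero, sub_self, rpow_one] using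
      isBigO_sub_nhdsGT_of_hasDerivAt ht hcont hderiv hbdd
  have hparts := integral_rpow_smul_deriv_eq (r := -α) ht (by linarith) hcont hderiv hint hlinear
    (by simpa only [sub_self, rpow_zero] using hbdd)
  refine ⟨intervalIntegrable_rpow_smul_of_isBigO ht (by linarith)
    (hcont.intervalIntegrable_of_Icc ht.le) hlinear, ?_⟩
  rw [hreflect, hparts, sub_self, rpow_neg ht.le]
  module

/-- Proposition 2.1 (first identity): for `f ∈ C¹((0,T]) ∩ C([0,T])` with `f' ∈ L¹(0,T)`,
the Caputo derivative `∂ₜ^α f(t) = (1/Γ(1-α)) ∫₀ᵗ (t-s)^(-α) f'(s) ds` equals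
`(f(t)-f(0))/(t^α Γ(1-α)) + (α/Γ(1-α)) ∫₀ᵗ (f(t)-f(t-τ)) τ^(-α-1) dτ`,
and in particular the last integral converges. -/
theorem caputo_representation
    (T α : ℝ) (hT : 0 < T) (hα : α ∈ Ioo (0:ℝ) 1)
    (f f' : ℝ → ℝ)
    (hf_cont : ContinuousOn f (Icc 0 T))
    (hf_deriv : ∀ s ∈ Ioc (0:ℝ) T, HasDerivAt f (f' s) s)
    (hf'_cont : ContinuousOn f' (Ioc 0 T))
    (hf'_int : IntervalIntegrable f' volume 0 T) :
    ∀ t ∈ Ioc (0:ℝ) T,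
      IntervalIntegrable (fun τ => (f t - f (t - τ)) * τ ^ (-α - 1)) volume 0 t ∧
      (1 / Real.Gamma (1 - α)) * ∫ s in (0:ℝ)..t, (t - s) ^ (-α) * f' s
        = (f t - f 0) / (t ^ α * Real.Gamma (1 - α))
          + (α / Real.Gamma (1 - α)) * ∫ τ in (0:ℝ)..t, (f t - f (t - τ)) * τ ^ (-α - 1) := by
  rintro t ⟨ht, htT⟩
  have hIoo : Ioo 0 t ⊆ Ioc 0 T := fun s hs ↦ ⟨hs.1, hs.2.le.trans htT⟩
  have hIcc : Icc 0 t ⊆ Icc 0 T := Icc_subset_Icc_right htT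
  have hf'_left : Tendsto f' (𝓝[<] t) (𝓝 (f' t)) :=
    (hf'_cont t ⟨ht, htT⟩).mono_of_mem_nhdsWithin (mem_of_superset (Ioo_mem_nhdsLT ht) hIoo)
  have hf'_int_t : IntervalIntegrable f' volume 0 t :=
    hf'_int.mono_set (by rwa [uIcc_of_le ht.le, uIcc_of_le hT.le])
  simpa [div_eq_inv_mul, mul_comm] using caputo_representation_general hα.2 ht
    (hf_cont.mono hIcc) (fun s hs ↦ hf_deriv s (hIoo hs)) hf'_int_t (hf'_left.isBigO_one ℝ)
end

section
/- Let T > 0 and α ∈ (0,1). Let f : [0,T] → ℝ be continuous on [0,T], continuously differentiable on (0,T], and with f′ ∈ L¹(0,T). Define f̃ : (−∞,T] → ℝ by f̃(s) := f(s) for s ∈ (0,T] and f̃(s) := f(0) for s ≤ 0. Then for every t ∈ (0,T], the Caputo fractional derivative ∂ₜ^α f(t) := (1/Γ(1−α)) ∫₀ᵗ (t−s)^(−α) f′(s) ds equals (α/Γ(1−α)) ∫_{−∞}^t (f(t) − f̃(ξ)) |t−ξ|^(−α−1) dξ. -/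
open MeasureTheory Real Set
open scoped Topology

/-!
Since `f̃` has derivative `f'` on `(0, t)` and is constant on `(-∞, 0]`,
`f t - f̃ ξ = ∫ s in max 0 ξ..t, f' s` for `ξ ≤ t`. Inserting this in the right-hand side and
exchanging the two integrations leaves `f' s` weighted by
`α * ∫ ξ in Iio s, (t - ξ) ^ (-α - 1) = (t - s) ^ (-α)`, with no boundary terms. Fubini's theorem
applies as soon as `(t - s) ^ (-α) • f' s` is integrable; here this holds because `f'` is integrable
on `(0, t)` and bounded near `t`, where the weight has an integrable singularity.
-/

section Fubini

variable {X E : Type*} [LinearOrder X] [TopologicalSpace X] [OrderClosedTopology X]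
  [SecondCountableTopology X] [MeasurableSpace X] [OpensMeasurableSpace X]
  [NormedAddCommGroup E] [NormedSpace ℝ E] {μ ν : Measure X} [SFinite μ] [SFinite ν]
  {k : X → ℝ} {g : X → E}

theorem integrable_prod_indicator_lt_smul (hk : AEStronglyMeasurable k μ)
    (hk_int : ∀ᵐ s ∂ν, IntegrableOn k (Iio s) μ) (hg : AEStronglyMeasurable g ν)
    (hkg : Integrable (fun s ↦ (∫ ξ in Iio s, ‖k ξ‖ ∂μ) • g s) ν) :
    Integrable ({p : X × X | p.1 < p.2}.indicator fun p ↦ k p.1 • g p.2) (μ.prod ν) := by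
  have hmeas : AEStronglyMeasurable ({p : X × X | p.1 < p.2}.indicator fun p ↦ k p.1 • g p.2)
      (μ.prod ν) :=
    (hk.comp_fst.smul hg.comp_snd).indicator (measurableSet_lt measurable_fst measurable_snd)
  have hslice (s : X) : (fun ξ ↦ {p : X × X | p.1 < p.2}.indicator (fun p ↦ k p.1 • g p.2) (ξ, s))
      = (Iio s).indicator fun ξ ↦ k ξ • g s := rfl
  refine (integrable_prod_iff' hmeas).2 ⟨?_, ?_⟩
  · filter_upwards [hk_int] with s hs
    rw [hslice, integrable_indicator_iff measurableSet_Iio]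
    exact hs.smul_const (g s)
  · refine hkg.norm.congr (.of_forall fun s ↦ ?_)
    have hnorm : ∀ ξ, ‖{p : X × X | p.1 < p.2}.indicator (fun p ↦ k p.1 • g p.2) (ξ, s)‖
        = (Iio s).indicator (fun ξ ↦ ‖k ξ‖ * ‖g s‖) ξ := fun ξ ↦ by
      rw [norm_indicator_eq_indicator_norm]
      simp only [norm_smul]
      rfl
    simp only [hnorm, integral_indicator measurableSet_Iio, integral_mul_const, norm_smul]
    rw [norm_of_nonneg (integral_nonneg fun _ ↦ norm_nonneg _)]

theorem integral_smul_setIntegral_Ioi [CompleteSpace E] (hk : AEStronglyMeasurable k μ)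
    (hk_int : ∀ᵐ s ∂ν, IntegrableOn k (Iio s) μ) (hg : AEStronglyMeasurable g ν)
    (hkg : Integrable (fun s ↦ (∫ ξ in Iio s, ‖k ξ‖ ∂μ) • g s) ν) :
    ∫ ξ, k ξ • ∫ s in Ioi ξ, g s ∂ν ∂μ = ∫ s, (∫ ξ in Iio s, k ξ ∂μ) • g s ∂ν := by
  calc ∫ ξ, k ξ • ∫ s in Ioi ξ, g s ∂ν ∂μ
      = ∫ ξ, ∫ s, {p : X × X | p.1 < p.2}.indicator (fun p ↦ k p.1 • g p.2) (ξ, s) ∂ν ∂μ := by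
        refine integral_congr_ae (.of_forall fun ξ ↦ ?_)
        simp only [← integral_smul]
        exact (integral_indicator measurableSet_Ioi).symm
    _ = ∫ s, ∫ ξ, {p : X × X | p.1 < p.2}.indicator (fun p ↦ k p.1 • g p.2) (ξ, s) ∂μ ∂ν :=
        integral_integral_swap (integrable_prod_indicator_lt_smul hk hk_int hg hkg)
    _ = ∫ s, (∫ ξ in Iio s, k ξ ∂μ) • g s ∂ν := by
        refine integral_congr_ae (.of_forall fun s ↦ ?_)
        simp only [← integral_smul_const]
        exact integral_indicator measurableSet_Iio

end Fubini

section PowerKernel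

theorem integrableOn_Iio_sub_rpow {r s t : ℝ} (hr : r < -1) (hst : s < t) :
    IntegrableOn (fun ξ ↦ (t - ξ) ^ r) (Iio s) := by
  have hpre : (t - ·) ⁻¹' Ioi (t - s) = Iio s := by simp
  rw [← hpre]
  exact ((Measure.measurePreserving_sub_left volume t).integrableOn_comp_preimage
    (MeasurableEquiv.subLeft t).measurableEmbedding).2
    (integrableOn_Ioi_rpow_of_lt hr (sub_pos.2 hst))

theorem integral_Iio_sub_rpow {r s t : ℝ} (hr : r < -1) (hst : s < t) :
    ∫ ξ in Iio s, (t - ξ) ^ r = -(t - s) ^ (r + 1) / (r + 1) := by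
  have hpre : (t - ·) ⁻¹' Ioi (t - s) = Iio s := by simp
  rw [← hpre, ← integral_Ioi_rpow_of_lt hr (sub_pos.2 hst)]
  exact (Measure.measurePreserving_sub_left volume t).setIntegral_preimage_emb
    (MeasurableEquiv.subLeft t).measurableEmbedding (· ^ r) (Ioi (t - s))

theorem integral_Iio_norm_sub_rpow {r s t : ℝ} (hr : r < -1) (hst : s < t) :
    ∫ ξ in Iio s, ‖(t - ξ) ^ r‖ = -(t - s) ^ (r + 1) / (r + 1) := by
  rw [← integral_Iio_sub_rpow hr hst]
  exact setIntegral_congr_fun measurableSet_Iio fun ξ hξ ↦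
    norm_of_nonneg (rpow_nonneg (sub_nonneg.2 (hξ.trans hst).le) r)

theorem intervalIntegrable_sub_rpow {r : ℝ} (hr : -1 < r) (a t : ℝ) :
    IntervalIntegrable (fun s ↦ (t - s) ^ r) volume a t := by
  simpa using (intervalIntegral.intervalIntegrable_rpow' (a := t - a) (b := 0) hr).comp_sub_left t

variable {E : Type*} [NormedAddCommGroup E] [NormedSpace ℝ E] {a t α : ℝ} {g : ℝ → E}

theorem intervalIntegrable_sub_rpow_smul_of_isBigO {r : ℝ} (hr : -1 < r) (hat : a < t)
    (hg : IntervalIntegrable g volume a t) (hgt : g =O[𝓝[<] t] fun _ ↦ (1 : ℝ)) :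
    IntervalIntegrable (fun s ↦ (t - s) ^ r • g s) volume a t := by
  obtain ⟨C, hC⟩ := hgt.bound
  obtain ⟨c, ⟨hac, hct⟩, hcC⟩ := (mem_nhdsLT_iff_exists_mem_Ico_Ioo_subset hat).1 hC
  have hc_mem : c ∈ uIcc a t := by rw [uIcc_of_le hat.le]; exact ⟨hac, hct.le⟩
  have hleft : IntervalIntegrable (fun s ↦ (t - s) ^ r • g s) volume a c := by
    refine (hg.mono_set (uIcc_subset_uIcc_left hc_mem)).continuousOn_smul ?_
    refine ContinuousOn.rpow_const (by fun_prop) fun s hs ↦ .inl (sub_pos.2 ?_).ne'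
    rw [uIcc_of_le hac] at hs
    exact hs.2.trans_lt hct
  have hright : IntervalIntegrable (fun s ↦ (t - s) ^ r • g s) volume c t := by
    have hgc := hg.mono_set (uIcc_subset_uIcc_right hc_mem)
    have hkc := intervalIntegrable_sub_rpow hr c t
    rw [intervalIntegrable_iff_integrableOn_Ioo_of_le hct.le] at hgc hkc ⊢
    refine hkc.smul_bdd C hgc.aestronglyMeasurable ?_
    filter_upwards [ae_restrict_mem measurableSet_Ioo] with s hs
    simpa using hcC hs
  exact hleft.trans hright

theorem intervalIntegrable_of_sub_rpow_smul (hα : 0 ≤ α) (hat : a ≤ t)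
    (hg : IntervalIntegrable (fun s ↦ (t - s) ^ (-α) • g s) volume a t) :
    IntervalIntegrable g volume a t := by
  have hcont : ContinuousOn (fun s ↦ (t - s) ^ α) (uIcc a t) :=
    ContinuousOn.rpow_const (by fun_prop) fun _ _ ↦ .inr hα
  refine (hg.continuousOn_smul hcont).congr_uIoo fun s hs ↦ ?_
  rw [uIoo_of_le hat] at hs
  simp only
  rw [smul_smul, ← rpow_add (sub_pos.2 hs.2), add_neg_cancel, rpow_zero, one_smul]

theorem setIntegral_Ioi_restrict_Ioo {ξ : ℝ} (hat : a ≤ t) (hξ : ξ ≤ t) :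
    ∫ s in Ioi ξ, g s ∂volume.restrict (Ioo a t) = ∫ s in max a ξ..t, g s := by
  rw [Measure.restrict_restrict measurableSet_Ioi, Ioi_inter_Ioo, max_comm,
    intervalIntegral.integral_of_le (max_le hat hξ), integral_Ioc_eq_integral_Ioo]

theorem integral_Iic_sub_rpow_smul_integral_max [CompleteSpace E] (hα : 0 < α) (hat : a ≤ t)
    (hg : IntervalIntegrable (fun s ↦ (t - s) ^ (-α) • g s) volume a t) :
    ∫ ξ in Iic t, (t - ξ) ^ (-α - 1) • ∫ s in max a ξ..t, g s
      = α⁻¹ • ∫ s in a..t, (t - s) ^ (-α) • g s := by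
  have hr : -α - 1 < -1 := by linarith
  have hkernel (s : ℝ) :
      -(t - s) ^ (-α - 1 + 1) / (-α - 1 + 1) = α⁻¹ * (t - s) ^ (-α) := by
    rw [sub_add_cancel, neg_div_neg_eq, div_eq_inv_mul]
  have hg_meas : AEStronglyMeasurable g (volume.restrict (Ioo a t)) :=
    ((intervalIntegrable_iff_integrableOn_Ioo_of_le hat).1
      (intervalIntegrable_of_sub_rpow_smul hα.le hat hg)).aestronglyMeasurable
  rw [intervalIntegrable_iff_integrableOn_Ioo_of_le hat] at hg
  calc ∫ ξ in Iic t, (t - ξ) ^ (-α - 1) • ∫ s in max a ξ..t, g s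
      = ∫ ξ in Iic t, (t - ξ) ^ (-α - 1) • ∫ s in Ioi ξ, g s ∂volume.restrict (Ioo a t) :=
        setIntegral_congr_fun measurableSet_Iic fun ξ hξ ↦
          congrArg _ (setIntegral_Ioi_restrict_Ioo hat hξ).symm
    _ = ∫ ξ, (t - ξ) ^ (-α - 1) • ∫ s in Ioi ξ, g s ∂volume.restrict (Ioo a t) := by
        refine setIntegral_eq_integral_of_forall_compl_eq_zero fun ξ hξ ↦ ?_
        rw [Measure.restrict_restrict measurableSet_Ioi, Ioi_inter_Ioo,
          Ioo_eq_empty_of_le (le_max_of_le_left (not_le.1 hξ).le), setIntegral_empty, smul_zero]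
    _ = ∫ s in Ioo a t, (∫ ξ in Iio s, (t - ξ) ^ (-α - 1)) • g s := by
        refine integral_smul_setIntegral_Ioi
          ((measurable_const.sub measurable_id).pow_const _).aestronglyMeasurable ?_ hg_meas ?_
        · filter_upwards [ae_restrict_mem measurableSet_Ioo] with s hs
          exact integrableOn_Iio_sub_rpow hr hs.2
        · refine IntegrableOn.congr_fun (hg.smul α⁻¹) (fun s hs ↦ ?_) measurableSet_Ioo
          simp only [integral_Iio_norm_sub_rpow hr hs.2, hkernel s, mul_smul, Pi.smul_apply]
    _ = ∫ s in Ioo a t, α⁻¹ • (t - s) ^ (-α) • g s :=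
        setIntegral_congr_fun measurableSet_Ioo fun s hs ↦ by
          simp only [integral_Iio_sub_rpow hr hs.2, hkernel s, mul_smul]
    _ = α⁻¹ • ∫ s in a..t, (t - s) ^ (-α) • g s := by
        rw [integral_smul, intervalIntegral.integral_of_le hat, integral_Ioc_eq_integral_Ioo]

end PowerKernel

theorem caputo_representation_extended_general {E : Type*} [NormedAddCommGroup E]
    [NormedSpace ℝ E] [CompleteSpace E] {a t α : ℝ} (hα : 0 < α) (hat : a ≤ t)
    {f f' ftilde : ℝ → E} (hf_cont : ContinuousOn f (Icc a t))
    (hf_deriv : ∀ s ∈ Ioo a t, HasDerivAt f (f' s) s)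
    (hf'_int : IntervalIntegrable (fun s ↦ (t - s) ^ (-α) • f' s) volume a t)
    (hftilde_pos : ∀ s ∈ Ioc a t, ftilde s = f s) (hftilde_neg : ∀ s ≤ a, ftilde s = f a) :
    ∫ s in a..t, (t - s) ^ (-α) • f' s
      = α • ∫ ξ in Iic t, |t - ξ| ^ (-α - 1) • (f t - ftilde ξ) := by
  have hincrement {ξ : ℝ} (hξ : ξ ≤ t) : ∫ s in max a ξ..t, f' s = f t - ftilde ξ := by
    have hmax : max a ξ ≤ t := max_le hat hξ
    have hftilde : ftilde ξ = f (max a ξ) := by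
      rcases le_or_gt ξ a with h | h
      · rw [max_eq_left h, hftilde_neg ξ h]
      · rw [max_eq_right h.le, hftilde_pos ξ ⟨h, hξ⟩]
    rw [hftilde]
    refine intervalIntegral.integral_eq_sub_of_hasDerivAt_of_le hmax
      (hf_cont.mono (Icc_subset_Icc_left (le_max_left a ξ)))
      (fun s hs ↦ hf_deriv s ⟨(le_max_left a ξ).trans_lt hs.1, hs.2⟩)
      ((intervalIntegrable_of_sub_rpow_smul hα.le hat hf'_int).mono_set ?_)
    rw [uIcc_of_le hmax, uIcc_of_le hat]
    exact Icc_subset_Icc_left (le_max_left a ξ)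
  calc ∫ s in a..t, (t - s) ^ (-α) • f' s
      = α • ∫ ξ in Iic t, (t - ξ) ^ (-α - 1) • ∫ s in max a ξ..t, f' s := by
        rw [integral_Iic_sub_rpow_smul_integral_max hα hat hf'_int, smul_inv_smul₀ hα.ne']
    _ = α • ∫ ξ in Iic t, |t - ξ| ^ (-α - 1) • (f t - ftilde ξ) := by
        congr 1
        refine setIntegral_congr_fun measurableSet_Iic fun ξ hξ ↦ ?_
        simp only [hincrement hξ, abs_of_nonneg (sub_nonneg.2 (mem_Iic.1 hξ))]

/-- Proposition 2.1 (second identity): for `f ∈ C¹((0,T]) ∩ C([0,T])` with `f' ∈ L¹(0,T)`,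
the Caputo derivative `∂ₜ^α f(t)` equals `(α/Γ(1-α)) ∫_{-∞}^t (f(t) - f̃(ξ)) |t-ξ|^(-α-1) dξ`,
where `f̃` extends `f` by `f(0)` to `(-∞,0]`. -/
theorem caputo_representation_extended
    (T α : ℝ) (hT : 0 < T) (hα : α ∈ Ioo (0:ℝ) 1)
    (f f' : ℝ → ℝ)
    (hf_cont : ContinuousOn f (Icc 0 T))
    (hf_deriv : ∀ s ∈ Ioc (0:ℝ) T, HasDerivAt f (f' s) s)
    (hf'_cont : ContinuousOn f' (Ioc 0 T))
    (hf'_int : IntervalIntegrable f' volume 0 T)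
    (ftilde : ℝ → ℝ)
    (hftilde_pos : ∀ s ∈ Ioc (0:ℝ) T, ftilde s = f s)
    (hftilde_neg : ∀ s : ℝ, s ≤ 0 → ftilde s = f 0) :
    ∀ t ∈ Ioc (0:ℝ) T,
      (1 / Real.Gamma (1 - α)) * ∫ s in (0:ℝ)..t, (t - s) ^ (-α) * f' s
        = (α / Real.Gamma (1 - α)) * ∫ ξ in Iic t, (f t - ftilde ξ) * |t - ξ| ^ (-α - 1) := by
  intro t ht
  have hmem : Ioc 0 T ∈ 𝓝[<] t := Filter.mem_of_superset (Ioo_mem_nhdsLT ht.1)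
    fun s hs ↦ ⟨hs.1, hs.2.le.trans ht.2⟩
  have hbounded : f' =O[𝓝[<] t] fun _ ↦ (1 : ℝ) :=
    ((hf'_cont t ht).mono_of_mem_nhdsWithin hmem).isBigO_one ℝ
  have hweighted : IntervalIntegrable (fun s ↦ (t - s) ^ (-α) • f' s) volume 0 t :=
    intervalIntegrable_sub_rpow_smul_of_isBigO (by linarith [hα.2]) ht.1
      (hf'_int.mono_set (uIcc_subset_uIcc_left (by simpa [hT.le] using Ioc_subset_Icc_self ht)))
      hbounded
  have hidentity := caputo_representation_extended_general hα.1 ht.1.le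
    (hf_cont.mono (Icc_subset_Icc_right ht.2))
    (fun s hs ↦ hf_deriv s ⟨hs.1, hs.2.le.trans ht.2⟩) hweighted
    (fun s hs ↦ hftilde_pos s ⟨hs.1, hs.2.trans ht.2⟩) hftilde_neg
  simp only [smul_eq_mul] at hidentity
  simp only [hidentity, mul_comm (f t - ftilde _)]
  ring
end

section
/- Let T > 0 and α ∈ (0,1). Let f : [0,T] → ℝ be continuous on [0,T] and continuously differentiable on (0,T]. Then for every t ∈ (0,T] the integral K_(0,t)[f](t) := (α/Γ(1−α)) ∫₀ᵗ (f(t) − f(t−τ)) τ^(−α−1) dτ converges (the integrand is integrable on (0,t)), and the map t ↦ K_(0,t)[f](t) is continuous on (0,T]. -/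
open MeasureTheory Real Set

/-!
Substituting `τ = t u` moves the integral to a fixed interval,
`∫₀ᵗ τ^(-α-1) (f(t) - f(t-τ)) dτ = t^(-α) ∫₀¹ u^(-α-1) (f(t) - f(t-tu)) du`.
A function that is bounded on `[0,T]` and `r`-Hölder on each `[a,T]`, `a > 0`, satisfies
`‖f(t) - f(s)‖ ≤ C (t-s)^r` for all `s ∈ [0,t]`, uniformly for `t` away from `0`: use the Hölder
condition for `s` close to `t` and boundedness for `s` far from it. The integrand on the right is
therefore dominated, locally uniformly in `t`, by a multiple of `u^(r-α-1)`, which is integrable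
when `α < r`; a `C¹` function is the case `r = 1`.
-/

open scoped NNReal Topology

theorem exists_lipschitzOnWith_of_hasDerivWithinAt {𝕜 E : Type*} [RCLike 𝕜]
    [NormedAddCommGroup E] [NormedSpace 𝕜 E] {s : Set 𝕜} {f f' : 𝕜 → E}
    (hs : Convex ℝ s) (hs_compact : IsCompact s)
    (hf : ∀ x ∈ s, HasDerivWithinAt f (f' x) s x) (hf' : ContinuousOn f' s) :
    ∃ C, LipschitzOnWith C f s := by
  obtain ⟨C, hC⟩ := hs_compact.exists_bound_of_continuousOn hf'
  exact ⟨C.toNNReal, hs.lipschitzOnWith_of_nnnorm_hasDerivWithin_le hf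
    fun x hx => NNReal.le_toNNReal_of_coe_le (hC x hx)⟩

theorem exists_holderOnWith_one_Icc_of_hasDerivAt {E : Type*} [NormedAddCommGroup E]
    [NormedSpace ℝ E] {f f' : ℝ → E} {c T a : ℝ} (hf : ∀ s ∈ Ioc c T, HasDerivAt f (f' s) s)
    (hf' : ContinuousOn f' (Ioc c T)) (ha : a ∈ Ioc c T) :
    ∃ C, HolderOnWith C 1 f (Icc a T) := by
  have hsub : Icc a T ⊆ Ioc c T := fun s hs => ⟨ha.1.trans_le hs.1, hs.2⟩
  simpa only [holderOnWith_one] using exists_lipschitzOnWith_of_hasDerivWithinAt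
    (convex_Icc a T) isCompact_Icc (fun s hs => (hf s (hsub hs)).hasDerivWithinAt) (hf'.mono hsub)

theorem norm_sub_le_of_holderOnWith_of_le_dist {X E : Type*} [PseudoMetricSpace X]
    [SeminormedAddCommGroup E] {C r : ℝ≥0} {M δ : ℝ} {f : X → E} {s : Set X} {x y : X}
    (hf : HolderOnWith C r f s) (hx : x ∈ s) (hfx : ‖f x‖ ≤ M) (hfy : ‖f y‖ ≤ M)
    (hδ : 0 < δ) (hfar : y ∉ s → δ ≤ dist x y) :
    ‖f x - f y‖ ≤ (C + 2 * M / δ ^ (r : ℝ)) * dist x y ^ (r : ℝ) := by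
  have hM : 0 ≤ M := (norm_nonneg _).trans hfx
  rw [add_mul]
  by_cases hy : y ∈ s
  · have hnear : ‖f x - f y‖ ≤ C * dist x y ^ (r : ℝ) := by
      simpa only [dist_eq_norm] using hf.dist_le hx hy
    exact hnear.trans (le_add_of_nonneg_right (by positivity))
  · calc ‖f x - f y‖ ≤ M + M := norm_sub_le_of_le hfx hfy
      _ = 2 * M / δ ^ (r : ℝ) * δ ^ (r : ℝ) := by
        rw [div_mul_cancel₀ _ (rpow_pos_of_pos hδ _).ne', two_mul]
      _ ≤ 2 * M / δ ^ (r : ℝ) * dist x y ^ (r : ℝ) := by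
        gcongr
        exact hfar hy
      _ ≤ _ := le_add_of_nonneg_left (by positivity)

theorem exists_norm_sub_le_mul_rpow {E : Type*} [SeminormedAddCommGroup E] {r : ℝ≥0} {c T b : ℝ}
    {f : ℝ → E} (hf : ContinuousOn f (Icc c T))
    (hf_holder : ∀ a ∈ Ioc c T, ∃ C, HolderOnWith C r f (Icc a T)) (hb : b ∈ Ioc c T) :
    ∃ C : ℝ, 0 ≤ C ∧ ∀ t ∈ Icc b T, ∀ s ∈ Icc c t, ‖f t - f s‖ ≤ C * (t - s) ^ (r : ℝ) := by
  obtain ⟨hcb, hbT⟩ := hb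
  obtain ⟨M, hM⟩ := isCompact_Icc.exists_bound_of_continuousOn hf
  have hM_nonneg : 0 ≤ M := (norm_nonneg _).trans (hM b ⟨hcb.le, hbT⟩)
  obtain ⟨a, hca, hab⟩ := exists_between hcb
  have hδ : 0 < b - a := sub_pos.2 hab
  obtain ⟨C, hC⟩ := hf_holder a ⟨hca, hab.le.trans hbT⟩
  refine ⟨C + 2 * M / (b - a) ^ (r : ℝ), by positivity, fun t ht s hs => ?_⟩
  have hdist : dist t s = t - s := by rw [Real.dist_eq, abs_of_nonneg (sub_nonneg.2 hs.2)]
  have hfar : s ∉ Icc a T → b - a ≤ dist t s := by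
    intro hs_notMem
    have hsa : s < a := by
      by_contra! has
      exact hs_notMem ⟨has, hs.2.trans ht.2⟩
    linarith [ht.1]
  rw [← hdist]
  exact norm_sub_le_of_holderOnWith_of_le_dist hC ⟨hab.le.trans ht.1, ht.2⟩
    (hM t ⟨hcb.le.trans ht.1, ht.2⟩) (hM s ⟨hs.1, hs.2.trans ht.2⟩) hδ hfar

section Marchaud

variable {E : Type*} [NormedAddCommGroup E] [NormedSpace ℝ E]

/-- The integrand of the Marchaud-type fractional derivative `K_(0,t)[f](t)`, as a function of `t`
and of the backward increment `τ`. -/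
noncomputable def marchaudIntegrand (α : ℝ) (f : ℝ → E) (t τ : ℝ) : E :=
  τ ^ (-α - 1) • (f t - f (t - τ))

/-- The Marchaud integrand in the variable `u = τ / t ∈ (0, 1]`, without the factor `t ^ (-α - 1)`
coming from `τ ^ (-α - 1)`. -/
noncomputable def rescaledMarchaudIntegrand (α : ℝ) (f : ℝ → E) (t u : ℝ) : E :=
  u ^ (-α - 1) • (f t - f (t - t * u))

theorem marchaudIntegrand_eq_mul (α : ℝ) (f : ℝ → ℝ) (t : ℝ) :
    marchaudIntegrand α f t = fun τ => (f t - f (t - τ)) * τ ^ (-α - 1) :=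
  funext fun _ => mul_comm _ _

variable {α T t : ℝ} {r : ℝ≥0} {f : ℝ → E}

theorem marchaudIntegrand_mul {u : ℝ} (ht : 0 ≤ t) (hu : 0 ≤ u) :
    marchaudIntegrand α f t (t * u) = t ^ (-α - 1) • rescaledMarchaudIntegrand α f t u := by
  rw [marchaudIntegrand, rescaledMarchaudIntegrand, smul_smul, mul_rpow ht hu]

theorem intervalIntegrable_marchaudIntegrand (ht : 0 < t)
    (h : IntervalIntegrable (rescaledMarchaudIntegrand α f t) volume 0 1) :
    IntervalIntegrable (marchaudIntegrand α f t) volume 0 t := by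
  rw [← IntervalIntegrable.comp_mul_left_iff ht.ne', zero_div, div_self ht.ne']
  refine (h.smul (t ^ (-α - 1))).congr fun u hu => ?_
  rw [uIoc_of_le zero_le_one] at hu
  exact (marchaudIntegrand_mul ht.le hu.1.le).symm

theorem integral_marchaudIntegrand (ht : 0 < t) :
    ∫ τ in (0 : ℝ)..t, marchaudIntegrand α f t τ =
      t ^ (-α) • ∫ u in (0 : ℝ)..1, rescaledMarchaudIntegrand α f t u :=
  calc ∫ τ in (0 : ℝ)..t, marchaudIntegrand α f t τ
      = t • ∫ u in (0 : ℝ)..1, marchaudIntegrand α f t (t * u) := by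
        rw [intervalIntegral.smul_integral_comp_mul_left, mul_zero, mul_one]
    _ = t • ∫ u in (0 : ℝ)..1, t ^ (-α - 1) • rescaledMarchaudIntegrand α f t u := by
        congr 1
        refine intervalIntegral.integral_congr fun u hu => ?_
        rw [uIcc_of_le zero_le_one] at hu
        exact marchaudIntegrand_mul ht.le hu.1
    _ = t ^ (-α) • ∫ u in (0 : ℝ)..1, rescaledMarchaudIntegrand α f t u := by
        rw [intervalIntegral.integral_smul, smul_smul, rpow_sub_one ht.ne',
          mul_div_cancel₀ _ ht.ne']

theorem continuousOn_uncurry_rescaledMarchaudIntegrand (hf : ContinuousOn f (Icc 0 T)) :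
    ContinuousOn (rescaledMarchaudIntegrand α f).uncurry (Icc 0 T ×ˢ Ioc 0 1) := by
  have hpow : ContinuousOn (fun p : ℝ × ℝ => p.2 ^ (-α - 1)) (Icc 0 T ×ˢ Ioc 0 1) :=
    continuousOn_snd.rpow_const fun p hp => Or.inl hp.2.1.ne'
  have hmaps : MapsTo (fun p : ℝ × ℝ => p.1 - p.1 * p.2) (Icc 0 T ×ˢ Ioc 0 1) (Icc 0 T) := by
    rintro ⟨t, u⟩ ⟨ht, hu⟩
    constructor <;> nlinarith [ht.1, ht.2, hu.1, hu.2]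
  exact hpow.smul ((hf.comp continuousOn_fst fun p hp => hp.1).sub
    (hf.comp (by fun_prop) hmaps))

theorem aestronglyMeasurable_rescaledMarchaudIntegrand (hf : ContinuousOn f (Icc 0 T))
    (ht : t ∈ Icc 0 T) :
    AEStronglyMeasurable (rescaledMarchaudIntegrand α f t) (volume.restrict (uIoc 0 1)) := by
  rw [uIoc_of_le zero_le_one]
  exact ((continuousOn_uncurry_rescaledMarchaudIntegrand hf).uncurry_left t ht).aestronglyMeasurable
    measurableSet_Ioc

theorem exists_norm_rescaledMarchaudIntegrand_le (hf : ContinuousOn f (Icc 0 T))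
    (hf_holder : ∀ a ∈ Ioc 0 T, ∃ C, HolderOnWith C r f (Icc a T)) {b : ℝ} (hb : b ∈ Ioc 0 T) :
    ∃ C : ℝ, ∀ t ∈ Icc b T, ∀ u ∈ uIoc (0 : ℝ) 1,
      ‖rescaledMarchaudIntegrand α f t u‖ ≤ C * u ^ (r - α - 1) := by
  obtain ⟨C, hC_nonneg, hC⟩ := exists_norm_sub_le_mul_rpow hf hf_holder hb
  refine ⟨C * T ^ (r : ℝ), fun t ht u hu => ?_⟩
  rw [uIoc_of_le zero_le_one] at hu
  obtain ⟨hu_pos, hu_le⟩ := hu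
  have ht_nonneg : 0 ≤ t := hb.1.le.trans ht.1
  have hT_nonneg : 0 ≤ T := ht_nonneg.trans ht.2
  have hincrement : ‖f t - f (t - t * u)‖ ≤ C * (T * u) ^ (r : ℝ) :=
    calc ‖f t - f (t - t * u)‖ ≤ C * (t - (t - t * u)) ^ (r : ℝ) :=
          hC t ht _ ⟨by nlinarith, by nlinarith⟩
      _ = C * (t * u) ^ (r : ℝ) := by rw [sub_sub_cancel]
      _ ≤ C * (T * u) ^ (r : ℝ) := by
        gcongr
        exact ht.2
  calc ‖rescaledMarchaudIntegrand α f t u‖ = u ^ (-α - 1) * ‖f t - f (t - t * u)‖ := by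
        rw [rescaledMarchaudIntegrand, norm_smul, norm_of_nonneg (rpow_nonneg hu_pos.le _)]
    _ ≤ u ^ (-α - 1) * (C * (T * u) ^ (r : ℝ)) := by gcongr
    _ = C * T ^ (r : ℝ) * (u ^ (r : ℝ) * u ^ (-α - 1)) := by
        rw [mul_rpow hT_nonneg hu_pos.le]
        ring
    _ = C * T ^ (r : ℝ) * u ^ (r - α - 1) := by
        rw [← rpow_add hu_pos]
        ring_nf

theorem intervalIntegrable_const_mul_rpow_sub_sub_one (hα : α < r) (C : ℝ) :
    IntervalIntegrable (fun u : ℝ => C * u ^ (r - α - 1)) volume 0 1 :=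
  (intervalIntegral.intervalIntegrable_rpow' (by linarith)).const_mul C

theorem intervalIntegrable_rescaledMarchaudIntegrand (hα : α < r) (hf : ContinuousOn f (Icc 0 T))
    (hf_holder : ∀ a ∈ Ioc 0 T, ∃ C, HolderOnWith C r f (Icc a T)) (ht : t ∈ Ioc 0 T) :
    IntervalIntegrable (rescaledMarchaudIntegrand α f t) volume 0 1 := by
  obtain ⟨C, hC⟩ := exists_norm_rescaledMarchaudIntegrand_le (α := α) hf hf_holder ht
  refine (intervalIntegrable_const_mul_rpow_sub_sub_one hα C).mono_fun'
    (aestronglyMeasurable_rescaledMarchaudIntegrand hf (Ioc_subset_Icc_self ht)) ?_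
  filter_upwards [ae_restrict_mem measurableSet_uIoc] with u hu
  exact hC t ⟨le_rfl, ht.2⟩ u hu

theorem continuousOn_integral_rescaledMarchaudIntegrand (hα : α < r)
    (hf : ContinuousOn f (Icc 0 T))
    (hf_holder : ∀ a ∈ Ioc 0 T, ∃ C, HolderOnWith C r f (Icc a T)) :
    ContinuousOn (fun t => ∫ u in (0 : ℝ)..1, rescaledMarchaudIntegrand α f t u) (Ioc 0 T) := by
  intro t₀ ht₀
  obtain ⟨C, hC⟩ := exists_norm_rescaledMarchaudIntegrand_le (α := α) hf hf_holder
    (b := t₀ / 2) ⟨half_pos ht₀.1, by linarith [ht₀.1, ht₀.2]⟩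
  have hnhds : ∀ᶠ t in 𝓝[Ioc 0 T] t₀, t ∈ Icc (t₀ / 2) T := by
    filter_upwards [self_mem_nhdsWithin,
      mem_nhdsWithin_of_mem_nhds (Ici_mem_nhds (half_lt_self ht₀.1))] with t ht ht_ge
    exact ⟨ht_ge, ht.2⟩
  refine intervalIntegral.continuousWithinAt_of_dominated_interval ?_ ?_
    (intervalIntegrable_const_mul_rpow_sub_sub_one hα C) ?_
  · filter_upwards [self_mem_nhdsWithin] with t ht
    exact aestronglyMeasurable_rescaledMarchaudIntegrand hf (Ioc_subset_Icc_self ht)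
  · filter_upwards [hnhds] with t ht
    exact .of_forall (hC t ht)
  · refine .of_forall fun u hu => ?_
    rw [uIoc_of_le zero_le_one] at hu
    exact (((continuousOn_uncurry_rescaledMarchaudIntegrand hf).uncurry_right u hu).mono
      Ioc_subset_Icc_self) t₀ ht₀

theorem K_exists_and_continuous_general [CompleteSpace E] (hα : α < r)
    (hf : ContinuousOn f (Icc 0 T))
    (hf_holder : ∀ a ∈ Ioc 0 T, ∃ C, HolderOnWith C r f (Icc a T)) :
    (∀ t ∈ Ioc 0 T, IntervalIntegrable (marchaudIntegrand α f t) volume 0 t) ∧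
    ContinuousOn (fun t => (α / Gamma (1 - α)) • ∫ τ in (0 : ℝ)..t, marchaudIntegrand α f t τ)
      (Ioc 0 T) := by
  refine ⟨fun t ht => intervalIntegrable_marchaudIntegrand ht.1
    (intervalIntegrable_rescaledMarchaudIntegrand hα hf hf_holder ht), .const_smul ?_ _⟩
  have hpow : ContinuousOn (fun t : ℝ => t ^ (-α)) (Ioc 0 T) :=
    continuousOn_id.rpow_const fun t ht => Or.inl ht.1.ne'
  exact (hpow.smul (continuousOn_integral_rescaledMarchaudIntegrand hα hf hf_holder)).congr
    fun t ht => integral_marchaudIntegrand ht.1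

end Marchaud

/-- Proposition 2.2: for `f ∈ C¹((0,T]) ∩ C([0,T])` and `t ∈ (0,T]`, the integral
`K_(0,t)[f](t) = (α/Γ(1-α)) ∫₀ᵗ (f(t) - f(t-τ)) τ^(-α-1) dτ` exists, and
`t ↦ K_(0,t)[f](t)` is continuous on `(0,T]`. -/
theorem K_exists_and_continuous
    (T α : ℝ) (hT : 0 < T) (hα : α ∈ Ioo (0:ℝ) 1)
    (f f' : ℝ → ℝ)
    (hf_cont : ContinuousOn f (Icc 0 T))
    (hf_deriv : ∀ s ∈ Ioc (0:ℝ) T, HasDerivAt f (f' s) s)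
    (hf'_cont : ContinuousOn f' (Ioc 0 T)) :
    (∀ t ∈ Ioc (0:ℝ) T,
      IntervalIntegrable (fun τ => (f t - f (t - τ)) * τ ^ (-α - 1)) volume 0 t) ∧
    ContinuousOn
      (fun t => (α / Real.Gamma (1 - α)) * ∫ τ in (0:ℝ)..t, (f t - f (t - τ)) * τ ^ (-α - 1))
      (Ioc 0 T) := by
  simpa only [marchaudIntegrand_eq_mul, smul_eq_mul] using
    K_exists_and_continuous_general (r := 1) hα.2 hf_cont
      fun _ => exists_holderOnWith_one_Icc_of_hasDerivAt hf_deriv hf'_cont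
end
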